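/- arXiv:0803.1339 — 2 statements merged into one kernel-verified Lean document; each statement's English description precedes it below -/
import Mathlib

section
/- For every nonnegative integer m, one has (Θ₋ + Θ₊)^m = Σ_{k=0}^{⌊m/2⌋} c_k(m) (2τ²)^k Σ_{s=0}^{m−2k} C(m−2k, s) Θ₋^s Θ₊^{m−2k−s} in ⋀V ⊗ End(P), where c_k(m) := m! / (2^k k! (m−2k)!) and C(·,·) denotes the binomial coefficient. -/
open Matrix MvPolynomial TensorProduct

noncomputable section

/-- Index set for entries `x_{i,j}` with `i < j`. -/
abbrev Idx (n : ℕ) := {p : Fin n × Fin n // p.1 < p.2}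

/-- Polynomial algebra on the space of alternating `n × n` matrices. -/
abbrev P (n : ℕ) := MvPolynomial (Idx n) ℂ

/-- Multiplication operator `M_{i,j}` (with `M_{j,i} = -M_{i,j}`, `M_{i,i} = 0`). -/
def Mop (n : ℕ) (i j : Fin n) : Module.End ℂ (P n) :=
  if h : i < j then LinearMap.mulLeft ℂ (X ⟨(i, j), h⟩)
  else if h' : j < i then -LinearMap.mulLeft ℂ (X ⟨(j, i), h'⟩ : P n)
  else 0

/-- Derivation `D_{i,j} = ∂/∂x_{i,j}` (with `D_{j,i} = -D_{i,j}`, `D_{i,i} = 0`). -/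
def Dop (n : ℕ) (i j : Fin n) : Module.End ℂ (P n) :=
  if h : i < j then ((pderiv ⟨(i, j), h⟩ : Derivation ℂ (P n) (P n)) : P n →ₗ[ℂ] P n)
  else if h' : j < i then -((pderiv ⟨(j, i), h'⟩ : Derivation ℂ (P n) (P n)) : P n →ₗ[ℂ] P n)
  else 0

/-- `2n`-dimensional vector space with basis indexed by `Fin n ⊕ Fin n`
(`Sum.inl i ↦ e_{i+1}`, `Sum.inr i ↦ e_{-(i+1)}`). -/
abbrev V (n : ℕ) := (Fin n ⊕ Fin n) → ℂ

/-- The tensor product algebra `⋀V ⊗ End(P)`. -/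
abbrev ExtEnd (n : ℕ) := ExteriorAlgebra ℂ (V n) ⊗[ℂ] Module.End ℂ (P n)

/-- The basis vectors `e_i` in the exterior algebra. -/
def e (n : ℕ) (v : Fin n ⊕ Fin n) : ExteriorAlgebra ℂ (V n) :=
  ExteriorAlgebra.ι ℂ (Pi.single v 1)

/-- `τ = Σ_i e_i e_{−i} ⊗ 1`. -/
def tau (n : ℕ) : ExtEnd n := ∑ i : Fin n, (e n (.inl i) * e n (.inr i)) ⊗ₜ[ℂ] 1

/-- `Θ₋ = Σ_{i,j} e_i e_j ⊗ M_{i,j}`. -/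
def ThetaMinus (n : ℕ) : ExtEnd n :=
  ∑ i : Fin n, ∑ j : Fin n, (e n (.inl i) * e n (.inl j)) ⊗ₜ[ℂ] Mop n i j

/-- `Θ₊ = Σ_{i,j} e_{−j} e_{−i} ⊗ D_{i,j}`. -/
def ThetaPlus (n : ℕ) : ExtEnd n :=
  ∑ i : Fin n, ∑ j : Fin n, (e n (.inr j) * e n (.inr i)) ⊗ₜ[ℂ] Dop n i j

/- When `b * a = a * b + c` with `c` commuting with `a` and `b`, multiplying the normally ordered
power `:(a + b)^p:` by `a + b` from the left gives `:(a + b)^(p + 1):` plus `p` times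
`c * :(a + b)^(p - 1):`, the correction coming from one contraction of the new `b` with one of the
`p` older factors. Hence `(a + b)^m` is the sum, over all partial matchings of the `m` factors, of
`c^k * :(a + b)^(m - 2k):`, where `k` is the number of matched pairs.

For `a = Θ₋` and `b = Θ₊` one has `c = 2τ²`. Indeed `Θ₋` and `Θ₊` are twice the corresponding sums
over `i < j`, so by the canonical commutation relations their commutator is
`4 ∑_{i < j} e_{-j} e_{-i} e_i e_j = 4 ∑_{i < j} t_i t_j` with `t_i = e_i e_{-i}`. The `t_i` commute
and square to zero, so this is `2 (∑ t_i)² = 2τ²`. -/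

section PairingCount

/-- The number of sets of `k` disjoint pairs in an `m`-element set: choose the `2 * k` elements to
be paired, then one of their `(2 * k - 1)‼` perfect matchings. It counts the ways of contracting
`k` pairs among `m` factors. For `k = 0` the truncated `2 * 0 - 1 = 0` still gives `0‼ = 1`. -/
def pairingCount (m k : ℕ) : ℕ := m.choose (2 * k) * Nat.doubleFactorial (2 * k - 1)

lemma pairingCount_zero_right (m : ℕ) : pairingCount m 0 = 1 := by
  simp [pairingCount]

lemma pairingCount_eq_zero_of_lt {m k : ℕ} (h : m < 2 * k) : pairingCount m k = 0 := by
  rw [pairingCount, Nat.choose_eq_zero_of_lt h, zero_mul]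

lemma pairingCount_succ_succ (m k : ℕ) :
    pairingCount (m + 1) (k + 1) = pairingCount m (k + 1) + pairingCount m k * (m - 2 * k) := by
  have doubleFactorial_odd :
      Nat.doubleFactorial (2 * k + 1) = (2 * k + 1) * Nat.doubleFactorial (2 * k - 1) := by
    cases k <;> rfl
  have choose_odd : m.choose (2 * k + 1) * (2 * k + 1) = m.choose (2 * k) * (m - 2 * k) :=
    Nat.choose_succ_right_eq m (2 * k)
  calc pairingCount (m + 1) (k + 1)
      = (m.choose (2 * k + 1) + m.choose (2 * k + 2)) * Nat.doubleFactorial (2 * k + 1) := rfl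
    _ = pairingCount m (k + 1)
          + m.choose (2 * k + 1) * (2 * k + 1) * Nat.doubleFactorial (2 * k - 1) := by
        rw [add_mul, add_comm, mul_assoc, ← doubleFactorial_odd]; rfl
    _ = pairingCount m (k + 1) + pairingCount m k * (m - 2 * k) := by
        rw [choose_odd, pairingCount, pairingCount, mul_right_comm]

lemma pairingCount_mul_factorial_mul_factorial {m k : ℕ} (h : 2 * k ≤ m) :
    pairingCount m k * (2 ^ k * k.factorial * (m - 2 * k).factorial) = m.factorial := by
  have factorial_even :
      (2 * k).factorial = 2 ^ k * k.factorial * Nat.doubleFactorial (2 * k - 1) := by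
    rw [← Nat.doubleFactorial_two_mul]
    cases k with
    | zero => rfl
    | succ k => exact Nat.factorial_eq_mul_doubleFactorial (2 * k + 1)
  rw [← Nat.choose_mul_factorial_mul_factorial h, factorial_even, pairingCount]
  ring

lemma cast_pairingCount {K : Type*} [DivisionRing K] [CharZero K] {m k : ℕ} (h : 2 * k ≤ m) :
    (pairingCount m k : K) = m.factorial / (2 ^ k * k.factorial * (m - 2 * k).factorial) := by
  have denominator_ne_zero : (2 ^ k * k.factorial * (m - 2 * k).factorial : K) ≠ 0 := by
    exact_mod_cast (by positivity : 2 ^ k * k.factorial * (m - 2 * k).factorial ≠ 0)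
  rw [eq_div_iff denominator_ne_zero]
  exact_mod_cast pairingCount_mul_factorial_mul_factorial h

end PairingCount

section NormalOrdering

variable {R : Type*} [Semiring R] {a b c : R}

/-- The normally ordered power `:(a + b)^p:`: the binomial expansion with every `a` to the left of
every `b`. -/
def normalOrderedPow (a b : R) (p : ℕ) : R :=
  ∑ st ∈ Finset.HasAntidiagonal.antidiagonal p, p.choose st.1 • (a ^ st.1 * b ^ st.2)

lemma normalOrderedPow_eq_sum_range (a b : R) (p : ℕ) :
    normalOrderedPow a b p = ∑ s ∈ Finset.range (p + 1), p.choose s • (a ^ s * b ^ (p - s)) :=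
  Finset.Nat.sum_antidiagonal_eq_sum_range_succ (fun s t ↦ p.choose s • (a ^ s * b ^ t)) p

lemma normalOrderedPow_zero (a b : R) : normalOrderedPow a b 0 = 1 := by
  simp [normalOrderedPow]

lemma normalOrderedPow_succ (a b : R) (p : ℕ) :
    normalOrderedPow a b (p + 1) = a * normalOrderedPow a b p + normalOrderedPow a b p * b := by
  rw [normalOrderedPow, Finset.sum_antidiagonal_choose_succ_nsmul fun s t ↦ a ^ s * b ^ t,
    normalOrderedPow, Finset.mul_sum, Finset.sum_mul, add_comm]
  congr 1 <;> refine Finset.sum_congr rfl fun st hst ↦ ?_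
  · rw [Nat.choose_symm_of_eq_add (Finset.HasAntidiagonal.mem_antidiagonal.mp hst).symm, pow_succ',
      mul_assoc, mul_smul_comm]
  · rw [pow_succ, ← mul_assoc, smul_mul_assoc]

lemma mul_normalOrderedPow_succ (h : b * a = a * b + c) (hca : Commute c a) (p : ℕ) :
    b * normalOrderedPow a b (p + 1) =
      normalOrderedPow a b (p + 1) * b + (p + 1) • (c * normalOrderedPow a b p) := by
  induction p with
  | zero => simp [normalOrderedPow_succ, normalOrderedPow_zero, mul_add, add_mul, h, add_right_comm]
  | succ p ih =>
    let N := normalOrderedPow a b (p + 1)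
    let L := normalOrderedPow a b p
    change b * N = N * b + (p + 1) • (c * L) at ih
    have succ_L : N = a * L + L * b := normalOrderedPow_succ a b p
    calc b * normalOrderedPow a b (p + 1 + 1)
        = a * (b * N) + c * N + b * N * b := by
          rw [normalOrderedPow_succ, mul_add, ← mul_assoc, h, add_mul, mul_assoc, mul_assoc]
      _ = (a * N + N * b) * b + (p + 1) • (a * (c * L) + c * L * b) + c * N := by
          rw [ih, mul_add, add_mul, add_mul, smul_add, mul_smul_comm, smul_mul_assoc, ← mul_assoc a]
          abel
      _ = (a * N + N * b) * b + (p + 1) • (c * N) + c * N := by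
          rw [← mul_assoc a, ← hca.eq, mul_assoc, mul_assoc c, ← mul_add, ← succ_L]
      _ = normalOrderedPow a b (p + 1 + 1) * b + (p + 1 + 1) • (c * N) := by
          rw [normalOrderedPow_succ, add_assoc, ← succ_nsmul]

lemma add_mul_normalOrderedPow (h : b * a = a * b + c) (hca : Commute c a) (p : ℕ) :
    (a + b) * normalOrderedPow a b p =
      normalOrderedPow a b (p + 1) + p • (c * normalOrderedPow a b (p - 1)) := by
  cases p with
  | zero => simp [normalOrderedPow_succ, normalOrderedPow_zero]
  | succ p =>
    rw [add_mul, mul_normalOrderedPow_succ h hca, normalOrderedPow_succ a b (p + 1), add_assoc,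
      Nat.add_sub_cancel]

lemma add_mul_pairingCount_smul (h : b * a = a * b + c) (hca : Commute c a) (hcb : Commute c b)
    (m k : ℕ) :
    (a + b) * pairingCount m k • (c ^ k * normalOrderedPow a b (m - 2 * k)) =
      pairingCount m k • (c ^ k * normalOrderedPow a b (m + 1 - 2 * k)) +
        (pairingCount m k * (m - 2 * k)) •
          (c ^ (k + 1) * normalOrderedPow a b (m + 1 - 2 * (k + 1))) := by
  rcases lt_or_ge m (2 * k) with hmk | hkm
  · simp [pairingCount_eq_zero_of_lt hmk]
  · have commute_pow : (a + b) * c ^ k = c ^ k * (a + b) :=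
      ((hca.add_right hcb).pow_left k).eq.symm
    rw [mul_smul_comm, ← mul_assoc, commute_pow, mul_assoc, add_mul_normalOrderedPow h hca, mul_add,
      smul_add, mul_smul_comm, smul_smul, ← mul_assoc (c ^ k), ← pow_succ,
      Nat.sub_add_comm hkm, show m + 1 - 2 * (k + 1) = m - 2 * k - 1 by omega]

/-- Any `K` with `m < 2 * K` bounds the sum, since later terms vanish; this freedom keeps the
parity of `m` out of the induction. -/
lemma add_pow_eq_sum_pairingCount (h : b * a = a * b + c) (hca : Commute c a) (hcb : Commute c b)
    {m K : ℕ} (hK : m < 2 * K) :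
    (a + b) ^ m =
      ∑ k ∈ Finset.range K, pairingCount m k • (c ^ k * normalOrderedPow a b (m - 2 * k)) := by
  obtain ⟨K, rfl⟩ : ∃ L, K = L + 1 := ⟨K - 1, by omega⟩
  induction m with
  | zero =>
    rw [Finset.sum_range_succ', Finset.sum_eq_zero fun k _ ↦ by
      rw [pairingCount_eq_zero_of_lt (by omega), zero_smul]]
    simp [pairingCount_zero_right, normalOrderedPow_zero]
  | succ m ih =>
    let N (k : ℕ) : R := c ^ k * normalOrderedPow a b (m + 1 - 2 * k)
    have last_contraction : pairingCount m K * (m - 2 * K) = 0 := by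
      rw [Nat.sub_eq_zero_of_le (by omega), mul_zero]
    calc (a + b) ^ (m + 1)
        = ∑ k ∈ Finset.range (K + 1), pairingCount m k • N k +
            ∑ k ∈ Finset.range (K + 1), (pairingCount m k * (m - 2 * k)) • N (k + 1) := by
          rw [pow_succ', ih (by omega), Finset.mul_sum, ← Finset.sum_add_distrib]
          exact Finset.sum_congr rfl fun k _ ↦ add_mul_pairingCount_smul h hca hcb m k
      _ = ∑ k ∈ Finset.range K,
            (pairingCount m (k + 1) + pairingCount m k * (m - 2 * k)) • N (k + 1) + N 0 := by
          rw [Finset.sum_range_succ', Finset.sum_range_succ _ K, last_contraction, zero_smul,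
            add_zero, pairingCount_zero_right, one_smul, add_right_comm, ← Finset.sum_add_distrib]
          simp only [add_smul]
      _ = ∑ k ∈ Finset.range (K + 1), pairingCount (m + 1) k • N k := by
          simp only [← pairingCount_succ_succ]
          rw [Finset.sum_range_succ', pairingCount_zero_right, one_smul]

end NormalOrdering

lemma sum_sum_eq_two_nsmul_sum_lt {α M : Type*} [Fintype α] [LinearOrder α] [AddCommMonoid M]
    {f : α → α → M} (symm : ∀ i j, f i j = f j i) (diag : ∀ i, f i i = 0) :
    ∑ i, ∑ j, f i j = 2 • ∑ p : {p : α × α // p.1 < p.2}, f p.1.1 p.1.2 := by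
  have sum_gt : ∑ p : α × α with p.2 < p.1, f p.1 p.2 = ∑ p : α × α with p.1 < p.2, f p.1 p.2 :=
    Finset.sum_equiv (Equiv.prodComm α α) (by simp) fun (p : α × α) _ ↦ symm p.1 p.2
  have sum_not_lt :
      ∑ p : α × α with ¬ p.1 < p.2, f p.1 p.2 = ∑ p : α × α with p.2 < p.1, f p.1 p.2 := by
    refine (Finset.sum_subset (fun p : α × α ↦ by simpa using le_of_lt) fun p hle hlt ↦ ?_).symm
    have heq : p.1 = p.2 := le_antisymm (by simpa using hlt) (by simpa using hle)
    rw [heq, diag]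
  calc ∑ i, ∑ j, f i j
      = ∑ p : α × α, f p.1 p.2 := (Fintype.sum_prod_type' f).symm
    _ = ∑ p : α × α with p.1 < p.2, f p.1 p.2 +
          ∑ p : α × α with p.2 < p.1, f p.1 p.2 := by
      rw [← sum_not_lt, Finset.sum_filter_add_sum_filter_not]
    _ = 2 • ∑ p : {p : α × α // p.1 < p.2}, f p.1.1 p.1.2 := by
      rw [sum_gt, ← two_nsmul]
      congr 1
      exact Finset.sum_subtype _ (by simp) fun p : α × α ↦ f p.1 p.2

lemma commute_tmul_one {R A B : Type*} [CommSemiring R] [Semiring A] [Algebra R A] [Semiring B]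
    [Algebra R B] {z : A} (hz : ∀ a, Commute z a) (w : A ⊗[R] B) : Commute (z ⊗ₜ[R] (1 : B)) w := by
  induction w with
  | zero => exact Commute.zero_right _
  | add x y hx hy => exact hx.add_right hy
  | tmul a x =>
    rw [commute_iff_eq, Algebra.TensorProduct.tmul_mul_tmul, Algebra.TensorProduct.tmul_mul_tmul,
      (hz a).eq, one_mul, mul_one]

section ExteriorAlgebra

open ExteriorAlgebra

variable {R M : Type*} [CommRing R] [AddCommGroup M] [Module R M]

lemma ι_mul_ι_swap (x y : M) : ι R x * ι R y = -(ι R y * ι R x) :=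
  eq_neg_of_add_eq_zero_left (ι_add_mul_swap x y)

lemma commute_ι_mul_ι (x y : M) (a : ExteriorAlgebra R M) : Commute (ι R x * ι R y) a := by
  induction a using ExteriorAlgebra.induction with
  | algebraMap r => exact Algebra.commute_algebraMap_right r _
  | ι z =>
    calc ι R x * ι R y * ι R z
        = -(ι R x * ι R z * ι R y) := by rw [mul_assoc, ι_mul_ι_swap y z, mul_neg, mul_assoc]
      _ = ι R z * (ι R x * ι R y) := by rw [ι_mul_ι_swap x z, neg_mul, neg_neg, mul_assoc]
  | mul a b ha hb => exact ha.mul_right hb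
  | add a b ha hb => exact ha.add_right hb

lemma ι_mul_ι_mul_self (x y : M) : ι R x * ι R y * (ι R x * ι R y) = 0 := by
  rw [← mul_assoc, (commute_ι_mul_ι x y (ι R x)).eq, ← mul_assoc, ι_sq_zero, zero_mul, zero_mul]

lemma ι_mul_ι_mul_ι_mul_ι_comm (x x' y y' : M) :
    ι R y' * ι R x' * (ι R x * ι R y) = ι R x * ι R x' * (ι R y * ι R y') := by
  calc ι R y' * ι R x' * (ι R x * ι R y)
      = ι R y' * (ι R x' * ι R x) * ι R y := by simp only [mul_assoc]
    _ = ι R x' * ι R x * (ι R y' * ι R y) := by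
      rw [← (commute_ι_mul_ι x' x (ι R y')).eq, mul_assoc]
    _ = ι R x * ι R x' * (ι R y * ι R y') := by
      rw [ι_mul_ι_swap x' x, ι_mul_ι_swap y' y, neg_mul_neg]

end ExteriorAlgebra

section Weyl

variable {R : Type*} [CommSemiring R]

lemma derivation_mul_mulLeft {S : Type*} [CommSemiring S] [Algebra R S] (D : Derivation R S S)
    (x : S) :
    (D : Module.End R S) * LinearMap.mulLeft R x =
      LinearMap.mulLeft R x * (D : Module.End R S) + LinearMap.mulLeft R (D x) :=
  LinearMap.ext fun y ↦ by simp [mul_comm y]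

variable {σ A : Type*} [Fintype σ] [Semiring A] [Algebra R A] {u v : σ → A}

lemma sum_tmul_derivation_mul_sum_tmul_mulLeft {S : Type*} [CommSemiring S] [Algebra R S]
    (comm : ∀ p q, Commute (v p) (u q)) (D : σ → Derivation R S S) (x : σ → S) :
    (∑ p, v p ⊗ₜ[R] (D p : Module.End R S)) * ∑ q, u q ⊗ₜ[R] LinearMap.mulLeft R (x q) =
      (∑ q, u q ⊗ₜ[R] LinearMap.mulLeft R (x q)) * ∑ p, v p ⊗ₜ[R] (D p : Module.End R S) +
        ∑ p, ∑ q, (v p * u q) ⊗ₜ[R] LinearMap.mulLeft R (D p (x q)) := by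
  have mulLeft_mul_derivation :
      (∑ q, u q ⊗ₜ[R] LinearMap.mulLeft R (x q)) * ∑ p, v p ⊗ₜ[R] (D p : Module.End R S) =
        ∑ p, ∑ q, (v p * u q) ⊗ₜ[R] (LinearMap.mulLeft R (x q) * (D p : Module.End R S)) := by
    rw [Finset.sum_mul_sum, Finset.sum_comm]
    simp only [Algebra.TensorProduct.tmul_mul_tmul, (comm _ _).eq]
  rw [mulLeft_mul_derivation, Finset.sum_mul_sum]
  simp only [Algebra.TensorProduct.tmul_mul_tmul, derivation_mul_mulLeft, tmul_add,
    Finset.sum_add_distrib]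

lemma sum_tmul_pderiv_mul_sum_tmul_mulLeft_X (comm : ∀ p q, Commute (v p) (u q)) :
    (∑ p, v p ⊗ₜ[R] ((pderiv p : Derivation R _ _) : Module.End R (MvPolynomial σ R))) *
        ∑ q, u q ⊗ₜ[R] LinearMap.mulLeft R (X q : MvPolynomial σ R) =
      (∑ q, u q ⊗ₜ[R] LinearMap.mulLeft R (X q : MvPolynomial σ R)) *
          ∑ p, v p ⊗ₜ[R] ((pderiv p : Derivation R _ _) : Module.End R (MvPolynomial σ R)) +
        ∑ p, (v p * u p) ⊗ₜ[R] (1 : Module.End R (MvPolynomial σ R)) := by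
  rw [sum_tmul_derivation_mul_sum_tmul_mulLeft comm pderiv X]
  congr 1
  refine Finset.sum_congr rfl fun p _ ↦ ?_
  rw [Fintype.sum_eq_single p fun q hqp ↦ by
      rw [pderiv_X_of_ne hqp, LinearMap.mulLeft_zero_eq_zero, tmul_zero],
    pderiv_X_self, LinearMap.mulLeft_one, Module.End.one_eq_id]

end Weyl

section Theta

variable (n : ℕ)

lemma commute_tau (w : ExtEnd n) : Commute (tau n) w :=
  Commute.sum_left _ _ _ fun _ _ ↦ commute_tmul_one (commute_ι_mul_ι _ _) w

lemma Mop_of_lt (p : Idx n) : Mop n p.1.1 p.1.2 = LinearMap.mulLeft ℂ (X p : P n) :=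
  dif_pos p.2

lemma Dop_of_lt (p : Idx n) :
    Dop n p.1.1 p.1.2 = ((pderiv p : Derivation ℂ _ _) : Module.End ℂ (P n)) :=
  dif_pos p.2

lemma Mop_swap (i j : Fin n) : Mop n i j = -Mop n j i := by
  rcases lt_trichotomy i j with h | rfl | h <;> simp [Mop, *, lt_asymm]

lemma Dop_swap (i j : Fin n) : Dop n i j = -Dop n j i := by
  rcases lt_trichotomy i j with h | rfl | h <;> simp [Dop, *, lt_asymm]

lemma thetaMinus_eq_sum_lt :
    ThetaMinus n = 2 * ∑ p : Idx n,
      (e n (.inl p.1.1) * e n (.inl p.1.2)) ⊗ₜ[ℂ] LinearMap.mulLeft ℂ (X p : P n) := by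
  rw [ThetaMinus, sum_sum_eq_two_nsmul_sum_lt, nsmul_eq_mul, Nat.cast_ofNat]
  · simp only [Mop_of_lt]
  · intro i j
    rw [Mop_swap, e, e, ι_mul_ι_swap, neg_tmul, tmul_neg, neg_neg]
  · intro i
    simp [Mop]

lemma thetaPlus_eq_sum_lt :
    ThetaPlus n = 2 * ∑ p : Idx n, (e n (.inr p.1.2) * e n (.inr p.1.1)) ⊗ₜ[ℂ]
      ((pderiv p : Derivation ℂ _ _) : Module.End ℂ (P n)) := by
  rw [ThetaPlus, sum_sum_eq_two_nsmul_sum_lt, nsmul_eq_mul, Nat.cast_ofNat]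
  · simp only [Dop_of_lt]
  · intro i j
    rw [Dop_swap, e, e, ι_mul_ι_swap, neg_tmul, tmul_neg, neg_neg]
  · intro i
    simp [Dop]

lemma tau_sq_eq_sum_lt :
    tau n ^ 2 = 2 * ∑ p : Idx n, (e n (.inl p.1.1) * e n (.inr p.1.1) *
      (e n (.inl p.1.2) * e n (.inr p.1.2))) ⊗ₜ[ℂ] (1 : Module.End ℂ (P n)) := by
  rw [sq, tau, Finset.sum_mul_sum]
  simp only [Algebra.TensorProduct.tmul_mul_tmul, mul_one]
  rw [sum_sum_eq_two_nsmul_sum_lt, nsmul_eq_mul, Nat.cast_ofNat]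
  · intro i j
    rw [e, e, (commute_ι_mul_ι _ _ _).eq]
  · intro i
    rw [e, e, ι_mul_ι_mul_self, zero_tmul]

lemma thetaPlus_mul_thetaMinus :
    ThetaPlus n * ThetaMinus n = ThetaMinus n * ThetaPlus n + 2 * tau n ^ 2 := by
  have four_mul (x y : ExtEnd n) : 2 * x * (2 * y) = 2 * (2 * (x * y)) := by
    rw [(Commute.ofNat_right x 2).mul_mul_mul_comm, mul_assoc]
  have comm (p q : Idx n) : Commute (e n (.inr p.1.2) * e n (.inr p.1.1))
      (e n (.inl q.1.1) * e n (.inl q.1.2)) := commute_ι_mul_ι _ _ _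
  rw [thetaMinus_eq_sum_lt, thetaPlus_eq_sum_lt, tau_sq_eq_sum_lt, four_mul, four_mul,
    sum_tmul_pderiv_mul_sum_tmul_mulLeft_X comm, mul_add, mul_add]
  simp only [e, ι_mul_ι_mul_ι_mul_ι_comm]

end Theta

/-- `(Θ₋ + Θ₊)^m = Σ_{k=0}^{⌊m/2⌋} c_k(m) (2τ²)^k Σ_{s=0}^{m−2k} C(m−2k,s) Θ₋^s Θ₊^{m−2k−s}`,
where `c_k(m) = m!/(2^k k! (m−2k)!)`. -/
theorem sum_pow_expansion (n : ℕ) (hn : 1 ≤ n) (m : ℕ) :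
    (ThetaMinus n + ThetaPlus n) ^ m =
      ∑ k ∈ Finset.range (m / 2 + 1),
        ((m.factorial : ℂ) /
            ((2 : ℂ) ^ k * (k.factorial : ℂ) * ((m - 2 * k).factorial : ℂ))) •
          ((2 * tau n ^ 2) ^ k *
            ∑ s ∈ Finset.range (m - 2 * k + 1),
              ((m - 2 * k).choose s) •
                (ThetaMinus n ^ s * ThetaPlus n ^ (m - 2 * k - s))) := by
  have commute_two_tau_sq (w : ExtEnd n) : Commute (2 * tau n ^ 2) w :=
    (Commute.ofNat_left 2 w).mul_left ((commute_tau n w).pow_left 2)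
  refine (add_pow_eq_sum_pairingCount (R := ExtEnd n) (thetaPlus_mul_thetaMinus n)
    (commute_two_tau_sq _) (commute_two_tau_sq _) (by omega : m < 2 * (m / 2 + 1))).trans ?_
  refine Finset.sum_congr rfl fun k hk ↦ ?_
  have two_mul_le : 2 * k ≤ m := by
    rw [Finset.mem_range] at hk
    omega
  rw [← cast_pairingCount two_mul_le, Nat.cast_smul_eq_nsmul, normalOrderedPow_eq_sum_range]

end
end

section
/- For every u ∈ ℂ, the Pfaffian of Φ̃(u) is a generating function for the operators Γ_k: Pf(Φ̃(u)) = Σ_{k=0}^{⌊n/2⌋} a_{n−2k}(u) · Γ_k in End(P), where for each nonnegative integer m, a_m(u) := Σ_{j=0}^{⌊m/2⌋} ( m! / (2^{2j} (m−2j)! j!) ) u^{m−2j} (a monic polynomial of degree m in u). -/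
open Matrix MvPolynomial

noncomputable section

/-- The generic alternating matrix with entries in `P n`. -/
def genMat (n : ℕ) : Matrix (Fin n) (Fin n) (P n) := Matrix.of fun i j =>
  if h : i < j then X ⟨(i, j), h⟩
  else if h' : j < i then -X ⟨(j, i), h'⟩
  else 0

/-- The representation `π(g)` of `GL n ℂ` on `P n`, sending `x_{i,j}` to the
`(i,j)`-entry of `g⁻¹ x ᵗ(g⁻¹)`. -/
def piHom (n : ℕ) (g : GL (Fin n) ℂ) : P n →ₐ[ℂ] P n :=
  aeval fun v : Idx n =>
    ((((g⁻¹ : GL (Fin n) ℂ) : Matrix (Fin n) (Fin n) ℂ).map (algebraMap ℂ (P n)) * genMat n *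
      (((g⁻¹ : GL (Fin n) ℂ) : Matrix (Fin n) (Fin n) ℂ).map (algebraMap ℂ (P n)))ᵀ))
      v.1.1 v.1.2

/-- Pfaffian of a `2m × 2m` matrix with (possibly noncommuting) entries in a `ℂ`-algebra. -/
def Pf {A : Type*} [Ring A] [Algebra ℂ A] {m : ℕ} (B : Matrix (Fin (2 * m)) (Fin (2 * m)) A) :
    A :=
  (((2 : ℂ) ^ m * m.factorial)⁻¹) • ∑ σ : Equiv.Perm (Fin (2 * m)),
    (Equiv.Perm.sign σ : ℤ) •
      (List.ofFn (fun i : Fin m =>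
        B (σ ⟨2 * (i : ℕ), by have := i.isLt; omega⟩)
          (σ ⟨2 * (i : ℕ) + 1, by have := i.isLt; omega⟩))).prod

/-- The matrix `J_n` with 1's on the anti-diagonal. -/
def Jmat (A : Type*) [Zero A] [One A] (n : ℕ) : Matrix (Fin n) (Fin n) A :=
  Matrix.of fun i j => if (i : ℕ) + (j : ℕ) = n - 1 then 1 else 0

/-- Reindexing `Fin n ⊕ Fin n ≃ Fin (2*n)`. -/
def sumEquiv (n : ℕ) : (Fin n ⊕ Fin n) ≃ Fin (2 * n) :=
  finSumFinEquiv.trans (finCongr (two_mul n).symm)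

/-- The alternating matrix `Φ̃(u) = [[M, u·J_n], [−u·J_n, −J_n D J_n]]` over `End(P)`. -/
def PhiTilde (n : ℕ) (u : ℂ) : Matrix (Fin (2 * n)) (Fin (2 * n)) (Module.End ℂ (P n)) :=
  Matrix.reindex (sumEquiv n) (sumEquiv n)
    (Matrix.fromBlocks (Matrix.of fun i j => Mop n i j) (u • Jmat (Module.End ℂ (P n)) n)
      (-(u • Jmat (Module.End ℂ (P n)) n))
      (-(Jmat (Module.End ℂ (P n)) n * (Matrix.of fun i j => Dop n i j) *
          Jmat (Module.End ℂ (P n)) n)))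


/-- `Γ_k = Σ_{|I|=2k} Pf(x_I) Pf(∂_I)`. -/
def Gamma (n k : ℕ) : Module.End ℂ (P n) :=
  ∑ I : {I : Finset (Fin n) // I.card = 2 * k},
    Pf (Matrix.of fun a b : Fin (2 * k) =>
        Mop n (I.1.orderIsoOfFin I.2 a) (I.1.orderIsoOfFin I.2 b)) *
      Pf (Matrix.of fun a b : Fin (2 * k) =>
        Dop n (I.1.orderIsoOfFin I.2 a) (I.1.orderIsoOfFin I.2 b))

/-- `a_m(u) = Σ_{j=0}^{⌊m/2⌋} (m!/(2^{2j} (m−2j)! j!)) u^{m−2j}`. -/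
def aPoly (m : ℕ) (u : ℂ) : ℂ :=
  ∑ j ∈ Finset.range (m / 2 + 1),
    ((m.factorial : ℂ) /
        ((2 : ℂ) ^ (2 * j) * ((m - 2 * j).factorial : ℂ) * (j.factorial : ℂ))) *
      u ^ (m - 2 * j)

open Finset.HasAntidiagonal
open scoped TensorProduct PowerSeries

/-!
Let `Λ` be the exterior algebra of a `2n`-dimensional space with basis `e₁, …, eₙ, fₙ, …, f₁`. In
`End(P) ⊗ Λ` the Pfaffian of `Φ̃(u)` is the coefficient of the volume form in `Ωⁿ / n!`, where
`Ω = X + Y + u T` with `X = ½ ∑ M_{ij} eᵢeⱼ`, `Y = -½ ∑ D_{ij} fᵢfⱼ` and `T = ∑ eᵢfᵢ`.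

Since `D` and `M` satisfy the Weyl relations, `[Y, X] = ½ T²`, and `T` is central. The
Baker–Campbell–Hausdorff formula therefore gives `exp(tΩ) = exp(utT + ¼t²T²) exp(tX) exp(tY)`. The
coefficient of `tᵐTᵐ` in the first factor is `aₘ(u) / m!`. The coefficients of `exp(tX)` and
`exp(tY)` are sums of terms `Pf(x_I) e_I` and `± Pf(∂_K) f_K`; multiplying by `Tᵐ` in complementary
degree kills every product `e_I f_K` with `I ≠ K`, which leaves `Γ_k` with `2k + m = n`.
-/

section ExponentialSeries

variable {𝕜 R : Type*} [Field 𝕜] [Ring R] [Algebra 𝕜 R]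

/-- The Euler operator `t · d/dt` on power series. Unlike `PowerSeries.derivative` it is available
over a noncommutative coefficient semiring. -/
def eulerDeriv {R : Type*} [Semiring R] (f : R⟦X⟧) : R⟦X⟧ :=
  PowerSeries.mk fun n => n • PowerSeries.coeff n f

theorem coeff_eulerDeriv {R : Type*} [Semiring R] (f : R⟦X⟧) (n : ℕ) :
    PowerSeries.coeff n (eulerDeriv f) = n • PowerSeries.coeff n f :=
  PowerSeries.coeff_mk _ _

theorem eulerDeriv_mul {R : Type*} [Semiring R] (f g : R⟦X⟧) :
    eulerDeriv (f * g) = eulerDeriv f * g + f * eulerDeriv g := by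
  ext n
  simp only [coeff_eulerDeriv, map_add, PowerSeries.coeff_mul, Finset.smul_sum,
    ← Finset.sum_add_distrib]
  refine Finset.sum_congr rfl fun p hp => ?_
  rw [← mem_antidiagonal.mp hp, add_smul, smul_mul_assoc, mul_smul_comm]

variable (𝕜) in
/-- The power series `exp(a tᵈ)`, for `d > 0`. -/
def expMonomial (d : ℕ) (a : R) : R⟦X⟧ :=
  PowerSeries.mk fun n => if d ∣ n then ((n / d).factorial : 𝕜)⁻¹ • a ^ (n / d) else 0

theorem coeff_expMonomial (d : ℕ) (a : R) (n : ℕ) :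
    PowerSeries.coeff n (expMonomial 𝕜 d a) =
      if d ∣ n then ((n / d).factorial : 𝕜)⁻¹ • a ^ (n / d) else 0 :=
  PowerSeries.coeff_mk _ _

theorem coeff_expMonomial_one (a : R) (n : ℕ) :
    PowerSeries.coeff n (expMonomial 𝕜 1 a) = (n.factorial : 𝕜)⁻¹ • a ^ n := by
  simp [coeff_expMonomial]

theorem coeff_zero_expMonomial (d : ℕ) (a : R) :
    PowerSeries.coeff 0 (expMonomial 𝕜 d a) = 1 := by
  simp [coeff_expMonomial]

theorem commute_C_expMonomial {a b : R} (h : Commute a b) (d : ℕ) :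
    Commute (PowerSeries.C a) (expMonomial 𝕜 d b) := by
  ext n
  simp only [PowerSeries.coeff_C_mul, PowerSeries.coeff_mul_C, coeff_expMonomial]
  split_ifs
  · exact (h.pow_right _).smul_right _
  · simp

section CharZero

variable [CharZero 𝕜]

theorem nsmul_inv_factorial_succ_smul (n : ℕ) (a : R) :
    (n + 1) • ((n + 1).factorial : 𝕜)⁻¹ • a = (n.factorial : 𝕜)⁻¹ • a := by
  rw [← Nat.cast_smul_eq_nsmul 𝕜, smul_smul, Nat.factorial_succ, Nat.cast_mul, mul_inv,
    mul_inv_cancel_left₀ (Nat.cast_ne_zero.mpr n.succ_ne_zero)]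

theorem eulerDeriv_expMonomial {d : ℕ} (hd : 0 < d) (a : R) :
    eulerDeriv (expMonomial 𝕜 d a) =
      d • (PowerSeries.X ^ d * (PowerSeries.C a * expMonomial 𝕜 d a)) := by
  ext n
  simp only [coeff_eulerDeriv, map_nsmul, PowerSeries.coeff_X_pow_mul', PowerSeries.coeff_C_mul,
    coeff_expMonomial]
  by_cases hdn : d ∣ n
  · obtain ⟨k, rfl⟩ := hdn
    rcases k with _ | k
    · simp [hd.ne']
    · have hsub : d * (k + 1) - d = d * k := by rw [mul_add_one, Nat.add_sub_cancel]
      simp only [dvd_mul_right, if_true, Nat.mul_div_cancel_left _ hd, hsub,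
        Nat.le_mul_of_pos_right d k.succ_pos, mul_smul, nsmul_inv_factorial_succ_smul, pow_succ',
        mul_smul_comm]
  · have : d ≤ n → ¬ d ∣ n - d := fun hle h => hdn ((Nat.dvd_sub_iff_left hle dvd_rfl).1 h)
    split_ifs <;> simp_all

theorem eulerDeriv_expMonomial_one (a : R) :
    eulerDeriv (expMonomial 𝕜 1 a) =
      PowerSeries.X * (PowerSeries.C a * expMonomial 𝕜 1 a) := by
  rw [eulerDeriv_expMonomial one_pos, one_smul, pow_one]

theorem eq_expMonomial_one {F : R⟦X⟧} {a : R} (h₀ : PowerSeries.coeff 0 F = 1)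
    (hF : eulerDeriv F = PowerSeries.X * (PowerSeries.C a * F)) : F = expMonomial 𝕜 1 a := by
  ext n
  rw [coeff_expMonomial_one]
  induction n with
  | zero => simpa using h₀
  | succ n ih =>
    have hn := congrArg (PowerSeries.coeff (n + 1)) hF
    rw [coeff_eulerDeriv, PowerSeries.coeff_succ_X_mul, PowerSeries.coeff_C_mul, ih, mul_smul_comm,
      ← pow_succ', ← nsmul_inv_factorial_succ_smul (𝕜 := 𝕜), ← Nat.cast_smul_eq_nsmul 𝕜,
      ← Nat.cast_smul_eq_nsmul 𝕜] at hn
    exact smul_right_injective R (Nat.cast_ne_zero.mpr n.succ_ne_zero : ((n + 1 : ℕ) : 𝕜) ≠ 0) hn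

end CharZero

theorem mul_X_mul {R : Type*} [Semiring R] (f g : R⟦X⟧) :
    f * (PowerSeries.X * g) = PowerSeries.X * (f * g) := by
  rw [← mul_assoc, (PowerSeries.commute_X f).eq, mul_assoc]

theorem mul_pow_succ_of_mul_eq {R : Type*} [Semiring R] {a b z : R} (hza : Commute z a)
    (h : b * a = a * b + z) (p : ℕ) :
    b * a ^ (p + 1) = a ^ (p + 1) * b + (p + 1) • (z * a ^ p) := by
  induction p with
  | zero => simpa using h
  | succ p ih =>
    rw [pow_succ a (p + 1), ← mul_assoc, ih, add_mul, mul_assoc, h, mul_add, mul_assoc _ a b,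
      ← (hza.pow_right (p + 1)).eq, smul_mul_assoc, mul_assoc z, ← pow_succ, add_assoc,
      succ_nsmul' _ (p + 1)]

variable [CharZero 𝕜]

theorem C_mul_expMonomial_one {a b z : R} (hza : Commute z a) (h : b * a = a * b + z) :
    PowerSeries.C b * expMonomial 𝕜 1 a =
      expMonomial 𝕜 1 a * PowerSeries.C b +
        PowerSeries.X * (PowerSeries.C z * expMonomial 𝕜 1 a) := by
  ext n
  rw [map_add, PowerSeries.coeff_C_mul, PowerSeries.coeff_mul_C]
  rcases n with _ | n
  · simp [coeff_expMonomial]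
  · rw [PowerSeries.coeff_succ_X_mul, PowerSeries.coeff_C_mul, coeff_expMonomial_one,
      coeff_expMonomial_one, mul_smul_comm, mul_pow_succ_of_mul_eq hza h, smul_add, smul_mul_assoc,
      mul_smul_comm, smul_comm, nsmul_inv_factorial_succ_smul]

theorem expMonomial_one_add_of_mul_eq {a b z : R} (hza : Commute z a) (hzb : Commute z b)
    (h : b * a = a * b + z) :
    expMonomial 𝕜 1 (a + b) =
      expMonomial 𝕜 2 ((2 : 𝕜)⁻¹ • z) * (expMonomial 𝕜 1 a * expMonomial 𝕜 1 b) := by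
  set G := expMonomial 𝕜 2 ((2 : 𝕜)⁻¹ • z) with hG
  set A := expMonomial 𝕜 1 a with hA
  set B := expMonomial 𝕜 1 b with hB
  have hGa : Commute (PowerSeries.C (a + b)) G :=
    commute_C_expMonomial ((hza.symm.add_left hzb.symm).smul_right _) 2
  have hGz : Commute (PowerSeries.C z) G := commute_C_expMonomial ((Commute.refl z).smul_right _) 2
  have hdG : eulerDeriv G = PowerSeries.X * (PowerSeries.X * (PowerSeries.C z * G)) := by
    rw [hG, eulerDeriv_expMonomial two_pos, ← mul_smul_comm, ← smul_mul_assoc, ← map_nsmul,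
      ← Nat.cast_smul_eq_nsmul 𝕜, smul_smul, Nat.cast_two, mul_inv_cancel₀ two_ne_zero, one_smul,
      pow_two, mul_assoc]
  have hbA : A * PowerSeries.C b =
      PowerSeries.C b * A - PowerSeries.X * (PowerSeries.C z * A) :=
    eq_sub_of_add_eq (C_mul_expMonomial_one hza h).symm
  refine (eq_expMonomial_one ?_ ?_).symm
  · simp [hG, hA, hB, PowerSeries.coeff_mul, coeff_zero_expMonomial]
  calc eulerDeriv (G * (A * B))
      = PowerSeries.X * (PowerSeries.X * (PowerSeries.C z * G * (A * B))) +
          PowerSeries.X * (G * (PowerSeries.C a * A * B + A * PowerSeries.C b * B)) := by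
        simp only [eulerDeriv_mul, hdG, hA, hB, eulerDeriv_expMonomial_one, mul_X_mul, mul_add,
          mul_assoc]
    _ = PowerSeries.X * (G * PowerSeries.C (a + b) * (A * B)) := by
        rw [hbA, hGz.eq, map_add]
        simp only [mul_add, add_mul, sub_mul, mul_sub, mul_X_mul, mul_assoc]
        abel
    _ = PowerSeries.X * (PowerSeries.C (a + b) * (G * (A * B))) := by
        rw [← hGa.eq, mul_assoc]

theorem expMonomial_one_add {a b : R} (h : Commute a b) :
    expMonomial 𝕜 1 (a + b) = expMonomial 𝕜 1 a * expMonomial 𝕜 1 b := by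
  have hone : expMonomial 𝕜 2 (0 : R) = 1 := by
    ext n
    rcases n with _ | _ | n <;> simp [coeff_expMonomial, PowerSeries.coeff_one]
  rw [expMonomial_one_add_of_mul_eq (𝕜 := 𝕜) (Commute.zero_left a) (Commute.zero_left b)
    (by rw [add_zero, h.eq]), smul_zero, hone, one_mul]

end ExponentialSeries

section GeneratingPolynomials

variable {R : Type*} [Ring R] [Algebra ℂ R]

theorem sum_antidiagonal_even_snd {M : Type*} [AddCommMonoid M] (F : ℕ → ℕ → M) (n : ℕ) :
    ∑ p ∈ antidiagonal n, (if 2 ∣ p.2 then F p.1 (p.2 / 2) else 0) =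
      ∑ k ∈ Finset.range (n / 2 + 1), F (n - 2 * k) k := by
  rw [← Finset.sum_filter]
  refine Finset.sum_nbij' (fun p => p.2 / 2) (fun k => (n - 2 * k, 2 * k)) ?_ ?_ ?_ ?_ ?_ <;>
    simp only [Finset.mem_filter, mem_antidiagonal, Finset.mem_range,
      Prod.forall, Prod.mk.injEq] <;> intros
  · omega
  · omega
  · omega
  · omega
  · congr 1; omega

theorem sum_antidiagonal_ite_eq {N : Type*} [AddCommMonoid N] (F : ℕ → N) (k : ℕ) :
    ∑ q ∈ antidiagonal k, (if q.1 = q.2 then F q.1 else 0) =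
      if 2 ∣ k then F (k / 2) else 0 := by
  split_ifs with hk
  · obtain ⟨p, rfl⟩ := hk
    rw [Finset.sum_eq_single (p, p), if_pos rfl, Nat.mul_div_cancel_left p two_pos]
    · rintro ⟨a, b⟩ hab hne
      rw [mem_antidiagonal] at hab
      refine if_neg fun h => hne ?_
      ext <;> dsimp only at * <;> omega
    · exact fun h => absurd (mem_antidiagonal.mpr (two_mul p).symm) h
  · refine Finset.sum_eq_zero fun q hq => if_neg fun h => hk ⟨q.1, ?_⟩
    rw [← mem_antidiagonal.mp hq, two_mul, h]

theorem coeff_expMonomial_one_mul_expMonomial_two (u : ℂ) (t : R) (m : ℕ) :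
    PowerSeries.coeff m
        (expMonomial ℂ 1 (u • t) * expMonomial ℂ 2 ((2 : ℂ)⁻¹ • (2 : ℂ)⁻¹ • t ^ 2)) =
      (aPoly m u / m.factorial) • t ^ m := by
  have hcoeff (p : ℕ × ℕ) : PowerSeries.coeff p.1 (expMonomial ℂ 1 (u • t)) *
        PowerSeries.coeff p.2 (expMonomial ℂ 2 ((2 : ℂ)⁻¹ • (2 : ℂ)⁻¹ • t ^ 2)) =
      if 2 ∣ p.2 then
        (u ^ p.1 / (p.1.factorial * (2 ^ (2 * (p.2 / 2)) * (p.2 / 2).factorial)) : ℂ) •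
          t ^ (p.1 + 2 * (p.2 / 2)) else 0 := by
    rw [coeff_expMonomial_one, coeff_expMonomial, mul_ite, mul_zero]
    simp only [smul_pow, smul_smul, smul_mul_smul_comm, ← pow_mul, ← pow_add]
    congr 2
    rw [← mul_inv, ← pow_two (2 : ℂ), inv_pow, ← pow_mul]
    ring
  rw [PowerSeries.coeff_mul, Finset.sum_congr rfl fun p _ => hcoeff p,
    sum_antidiagonal_even_snd fun i j => (u ^ i / (i.factorial * (2 ^ (2 * j) * j.factorial)) : ℂ) •
      t ^ (i + 2 * j), aPoly, Finset.sum_div, Finset.sum_smul]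
  refine Finset.sum_congr rfl fun j hj => ?_
  rw [Nat.sub_add_cancel (by have := Finset.mem_range.mp hj; omega)]
  congr 1
  field_simp [Nat.factorial_ne_zero]

theorem inv_factorial_smul_add_add_smul_pow {x y t : R} (u : ℂ) (n : ℕ) (htx : Commute t x)
    (hty : Commute t y) (h : y * x = x * y + (2 : ℂ)⁻¹ • t ^ 2) :
    (n.factorial : ℂ)⁻¹ • (x + y + u • t) ^ n =
      ∑ p ∈ antidiagonal n, (aPoly p.1 u / p.1.factorial) • t ^ p.1 *
        ∑ q ∈ antidiagonal p.2,
          ((q.1.factorial : ℂ)⁻¹ • x ^ q.1) * ((q.2.factorial : ℂ)⁻¹ • y ^ q.2) := by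
  have hexp : expMonomial ℂ 1 (x + y + u • t) =
      expMonomial ℂ 1 (u • t) * expMonomial ℂ 2 ((2 : ℂ)⁻¹ • (2 : ℂ)⁻¹ • t ^ 2) *
        (expMonomial ℂ 1 x * expMonomial ℂ 1 y) := by
    rw [add_comm, expMonomial_one_add ((htx.add_right hty).smul_left u),
      expMonomial_one_add_of_mul_eq ((htx.pow_left 2).smul_left _) ((hty.pow_left 2).smul_left _) h,
      mul_assoc]
  rw [← coeff_expMonomial_one, hexp, PowerSeries.coeff_mul]
  refine Finset.sum_congr rfl fun p _ => ?_
  rw [coeff_expMonomial_one_mul_expMonomial_two, PowerSeries.coeff_mul]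
  simp only [coeff_expMonomial_one]

end GeneratingPolynomials

section NilpotentSums

variable {A κ : Type*} [CommSemiring A] [Fintype κ] {t : κ → A}

theorem prod_mul_sum_eq_sum_prod_insert [DecidableEq κ] (ht : ∀ i, t i * t i = 0)
    (S : Finset κ) :
    (∏ i ∈ S, t i) * ∑ i, t i = ∑ i ∈ Sᶜ, ∏ j ∈ insert i S, t j := by
  rw [Finset.mul_sum, ← Finset.sum_compl_add_sum S, Finset.sum_eq_zero (s := S), add_zero]
  · refine Finset.sum_congr rfl fun i hi => ?_
    rw [Finset.prod_insert (Finset.mem_compl.mp hi), mul_comm]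
  · intro i hi
    rw [← Finset.prod_erase_mul S t hi, mul_assoc, ht, mul_zero]

theorem prod_mul_sum_pow (ht : ∀ i, t i * t i = 0) {m : ℕ} {S : Finset κ}
    (hS : S.card + m = Fintype.card κ) :
    (∏ i ∈ S, t i) * (∑ i, t i) ^ m = m.factorial • ∏ i, t i := by
  classical
  induction m generalizing S with
  | zero => simp [(Finset.card_eq_iff_eq_univ S).mp hS]
  | succ m ih =>
    rw [pow_succ', ← mul_assoc, prod_mul_sum_eq_sum_prod_insert ht, Finset.sum_mul,
      Finset.sum_congr rfl fun i hi => ih ?_, Finset.sum_const, Finset.card_compl, ← hS,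
      Nat.add_sub_cancel_left, smul_smul, Nat.factorial_succ]
    rw [Finset.card_insert_of_notMem (Finset.mem_compl.mp hi)]
    omega

theorem sum_pow_smul_eq_zero [DecidableEq κ] {N : Type*} [AddCommMonoid N] [Module A N]
    (ht : ∀ i, t i * t i = 0) {m : ℕ} {S : Finset κ} (hS : Sᶜ.card < m) {a : N}
    (ha : ∀ i ∈ S, t i • a = 0) : (∑ i, t i) ^ m • a = 0 := by
  induction m generalizing S a with
  | zero => simp at hS
  | succ m ih =>
    rw [pow_succ, mul_smul, Finset.sum_smul, Finset.smul_sum]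
    refine Finset.sum_eq_zero fun i _ => ?_
    by_cases hi : i ∈ S
    · rw [ha i hi, smul_zero]
    refine ih (S := insert i S) ?_ fun j hj => ?_
    · have := Finset.card_compl_add_card (insert i S)
      have := Finset.card_compl_add_card S
      rw [Finset.card_insert_of_notMem hi] at *
      omega
    · rcases Finset.mem_insert.mp hj with rfl | hj
      · rw [smul_smul, ht, zero_smul]
      · rw [smul_comm, ha j hj, smul_zero]

theorem card_compl_union_lt [DecidableEq κ] {I K : Finset κ} {p q m : ℕ}
    (hI : I.card = 2 * p) (hK : K.card = 2 * q) (h : p + q + m = Fintype.card κ) (hne : I ≠ K) :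
    (I ∪ K)ᶜ.card < m := by
  have hcompl := Finset.card_compl_add_card (I ∪ K)
  have hunion := Finset.card_union_add_card_inter I K
  have hleI := Finset.card_le_card (Finset.inter_subset_left (s₁ := I) (s₂ := K))
  have hleK := Finset.card_le_card (Finset.inter_subset_right (s₁ := I) (s₂ := K))
  by_contra! hm
  refine hne <| (Finset.eq_of_subset_of_card_le Finset.inter_subset_left ?_).symm.trans
    (Finset.eq_of_subset_of_card_le Finset.inter_subset_right ?_) <;> omega

end NilpotentSums

section Words

theorem sum_fin_succ_fun {κ N : Type*} [Fintype κ] [AddCommMonoid N] {m : ℕ}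
    (F : (Fin (m + 1) → κ) → N) : ∑ f, F f = ∑ i, ∑ f : Fin m → κ, F (Fin.cons i f) := by
  rw [← Fintype.sum_prod_type']
  exact (Fintype.sum_equiv (Fin.consEquiv fun _ => κ) _ _ fun _ => rfl).symm

variable {κ : Type*} [LinearOrder κ] {r : ℕ}

theorem orderEmbOfFin_univ_eq_id (h : (Finset.univ : Finset (Fin r)).card = r) :
    ⇑(Finset.univ.orderEmbOfFin h) = id :=
  (Finset.orderEmbOfFin_unique h (fun _ => Finset.mem_univ _) strictMono_id).symm

theorem prod_orderEmbOfFin {A : Type*} [CommMonoid A] {I : Finset κ} (hI : I.card = r)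
    (t : κ → A) : ∏ i, t (I.orderEmbOfFin hI i) = ∏ i ∈ I, t i := by
  conv_rhs => rw [← Finset.map_orderEmbOfFin_univ I hI, Finset.prod_map]
  rfl

theorem exists_orderEmbOfFin_comp_perm_eq {f : Fin r → κ} (hf : Function.Injective f) :
    ∃ (I : {I : Finset κ // I.card = r}) (σ : Equiv.Perm (Fin r)),
      I.1.orderEmbOfFin I.2 ∘ σ = f := by
  have hcard : (Finset.univ.image f).card = r := by
    rw [Finset.card_image_of_injective _ hf, Finset.card_fin]
  refine ⟨⟨Finset.univ.image f, hcard⟩, (Tuple.sort f)⁻¹, ?_⟩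
  have hmono : StrictMono (f ∘ Tuple.sort f) :=
    (Tuple.monotone_sort f).strictMono_of_injective (hf.comp (Tuple.sort f).injective)
  rw [← Finset.orderEmbOfFin_unique hcard
    (fun i => Finset.mem_image_of_mem f (Finset.mem_univ (Tuple.sort f i))) hmono]
  ext i
  simp

theorem orderEmbOfFin_comp_perm_injective :
    Function.Injective fun x : {I : Finset κ // I.card = r} × Equiv.Perm (Fin r) =>
      x.1.1.orderEmbOfFin x.1.2 ∘ x.2 := by
  rintro ⟨⟨I, hI⟩, σ⟩ ⟨⟨K, hK⟩, τ⟩ h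
  have hrange := congrArg Set.range h
  simp only [EquivLike.range_comp, Finset.range_orderEmbOfFin, Finset.coe_inj] at hrange
  subst hrange
  refine Prod.ext rfl (Equiv.ext fun a => (I.orderEmbOfFin hI).injective (congrFun h a))

theorem sum_fun_eq_sum_orderEmbOfFin_comp_perm {N : Type*} [Fintype κ] [AddCommMonoid N]
    {F : (Fin r → κ) → N} (hF : ∀ f, ¬ Function.Injective f → F f = 0) :
    ∑ f, F f = ∑ I : {I : Finset κ // I.card = r}, ∑ σ : Equiv.Perm (Fin r),
      F (I.1.orderEmbOfFin I.2 ∘ σ) := by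
  rw [← Fintype.sum_prod_type']
  refine (Finset.sum_of_injOn _ orderEmbOfFin_comp_perm_injective.injOn (by simp)
    (fun f _ hf => hF f fun hinj => ?_) fun _ _ => rfl).symm
  obtain ⟨I, σ, h⟩ := exists_orderEmbOfFin_comp_perm_eq hinj
  exact hf ⟨(I, σ), by simp, h⟩

end Words

section ExteriorAlgebra

open ExteriorAlgebra (ι ιMulti)

variable {R M κ : Type*} [CommRing R] [AddCommGroup M] [Module R M]

theorem ι_mul_ι_eq_neg (a b : M) : ι R a * ι R b = -(ι R b * ι R a) :=
  eq_neg_of_add_eq_zero_left (ExteriorAlgebra.ι_add_mul_swap a b)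

theorem ι_mul_ι_mem_center (a b : M) :
    ι R a * ι R b ∈ Subalgebra.center R (ExteriorAlgebra R M) := by
  refine Subalgebra.mem_center_iff.mpr fun x => ?_
  induction x using ExteriorAlgebra.induction with
  | algebraMap r => exact Algebra.commutes r _
  | ι c =>
    rw [← mul_assoc, ι_mul_ι_eq_neg c a, neg_mul, mul_assoc, ι_mul_ι_eq_neg c b, mul_neg, neg_neg,
      mul_assoc]
  | mul x y hx hy => rw [mul_assoc, hy, ← mul_assoc, hx, mul_assoc]
  | add x y hx hy => rw [add_mul, hx, hy, mul_add]

/-- The product `a ∧ b` of two vectors, as an element of the centre of the exterior algebra: the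
centre is commutative, so that finite products and powers of sums of such elements can be formed
there in the usual way. -/
def ιPair (R : Type*) {M : Type*} [CommRing R] [AddCommGroup M] [Module R M] (a b : M) :
    Subalgebra.center R (ExteriorAlgebra R M) :=
  ⟨ι R a * ι R b, ι_mul_ι_mem_center a b⟩

theorem coe_ιPair (a b : M) : (ιPair R a b : ExteriorAlgebra R M) = ι R a * ι R b :=
  rfl

theorem ιPair_mul_self (a b : M) : ιPair R a b * ιPair R a b = 0 := by
  ext
  rw [MulMemClass.coe_mul, coe_ιPair]
  nth_rewrite 1 [ι_mul_ι_eq_neg]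
  rw [neg_mul, mul_assoc, ← mul_assoc (ι R a), ExteriorAlgebra.ι_sq_zero, zero_mul, mul_zero,
    neg_zero, ZeroMemClass.coe_zero]

theorem ι_mul_ι_mul_eq_neg_ιPair_mul (a b c d : M) :
    ι R a * ι R b * (ι R c * ι R d) =
      -((ιPair R c a * ιPair R d b : Subalgebra.center R _) : ExteriorAlgebra R M) := by
  rw [Subalgebra.mem_center_iff.mp (ι_mul_ι_mem_center c d), MulMemClass.coe_mul, coe_ιPair,
    coe_ιPair, mul_assoc, ← mul_assoc (ι R d), ι_mul_ι_eq_neg d, neg_mul, mul_neg, mul_assoc,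
    mul_assoc]

theorem mul_center_smul {S A : Type*} [CommSemiring S] [Semiring A] [Algebra S A] (x : A)
    (z : Subalgebra.center S A) (y : A) : x * (z • y) = z • (x * y) := by
  rw [Subalgebra.smul_def, Subalgebra.smul_def, smul_eq_mul, smul_eq_mul, ← mul_assoc,
    Subalgebra.mem_center_iff.mp z.2, mul_assoc]

theorem ι_mul_ιMulti_of_mem_range {r : ℕ} {v : Fin r → M} {a : M} (ha : a ∈ Set.range v) :
    ι R a * ιMulti R r v = 0 := by
  obtain ⟨i, rfl⟩ := ha
  rw [ExteriorAlgebra.ιMulti_apply, ExteriorAlgebra.ι_mul_prod_list]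

theorem ιPair_smul_eq_zero_of_left {a : M} (b : M) {x : ExteriorAlgebra R M}
    (h : ι R a * x = 0) : ιPair R a b • x = 0 := by
  rw [Subalgebra.smul_def, smul_eq_mul, coe_ιPair, ι_mul_ι_eq_neg, neg_mul, mul_assoc, h, mul_zero,
    neg_zero]

theorem ιPair_smul_eq_zero_of_right (a : M) {b : M} {x : ExteriorAlgebra R M}
    (h : ι R b * x = 0) : ιPair R a b • x = 0 := by
  rw [Subalgebra.smul_def, smul_eq_mul, coe_ιPair, mul_assoc, h, mul_zero]

theorem ιMulti_succ_eq_mul_tail {r : ℕ} (v : Fin (r + 1) → M) :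
    ιMulti R (r + 1) v = ι R (v 0) * ιMulti R r (Fin.tail v) :=
  ExteriorAlgebra.ιMulti_succ_apply v

theorem ιMulti_mul_ι {r : ℕ} (v : Fin r → M) (a : M) :
    ιMulti R r v * ι R a = (-1 : R) ^ r • (ι R a * ιMulti R r v) := by
  induction r with
  | zero => simp
  | succ r ih =>
    rw [ιMulti_succ_eq_mul_tail, mul_assoc, ih, mul_smul_comm, ← mul_assoc, ι_mul_ι_eq_neg,
      neg_mul, mul_assoc, pow_succ, mul_neg_one, neg_smul, smul_neg]

theorem ιMulti_mul_ιMulti_eq_prod_ιPair {r : ℕ} (v w : Fin r → M) :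
    ιMulti R r v * ιMulti R r w =
      (-1 : R) ^ r.choose 2 •
        ((∏ i, ιPair R (v i) (w i) : Subalgebra.center R _) : ExteriorAlgebra R M) := by
  induction r with
  | zero => simp
  | succ r ih =>
    rw [ιMulti_succ_eq_mul_tail v, ιMulti_succ_eq_mul_tail w, mul_assoc, ← mul_assoc (ιMulti R r _),
      ιMulti_mul_ι, smul_mul_assoc, mul_assoc, ih, Fin.prod_univ_succ, MulMemClass.coe_mul,
      coe_ιPair, mul_smul_comm, mul_smul_comm, mul_smul_comm, smul_smul, ← pow_add,
      Nat.choose_succ_succ' r 1, Nat.choose_one_right, mul_assoc]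
    rfl

theorem ιMulti_mul_ιMulti_rev {r : ℕ} (v w : Fin r → M) :
    ιMulti R r v * ιMulti R r (w ∘ Fin.rev) =
      ((∏ i, ιPair R (v i) (w i) : Subalgebra.center R _) : ExteriorAlgebra R M) := by
  induction r with
  | zero => simp
  | succ r ih =>
    have hlast : ιMulti R (r + 1) (w ∘ Fin.rev) =
        ιMulti R r (Fin.tail w ∘ Fin.rev) * ι R (w 0) := by
      simp only [ExteriorAlgebra.ιMulti_apply, List.ofFn_succ', List.concat_eq_append,
        List.prod_append, List.prod_singleton, Function.comp_apply, Fin.rev_castSucc, Fin.rev_last]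
      rfl
    rw [ιMulti_succ_eq_mul_tail, hlast, mul_assoc, ← mul_assoc (ιMulti R r _), ih,
      ← Subalgebra.mem_center_iff.mp (SetLike.coe_mem _), ← mul_assoc, Fin.prod_univ_succ,
      MulMemClass.coe_mul, coe_ιPair]
    rfl

theorem neg_one_pow_two_mul_choose_two {R : Type*} [Monoid R] [HasDistribNeg R] (p : ℕ) :
    (-1 : R) ^ (2 * p).choose 2 = (-1) ^ p := by
  rw [Nat.choose_two_right, mul_assoc, Nat.mul_div_cancel_left _ two_pos]
  refine neg_one_pow_congr ?_
  rcases p with _ | p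
  · rfl
  · rw [Nat.even_mul, or_iff_left (Nat.not_even_iff_odd.mpr ⟨p, by omega⟩)]

theorem ιMulti_basis_ne_zero [Nontrivial R] {r : ℕ} (b : Module.Basis (Fin r) R M) :
    ιMulti R r b ≠ 0 := by
  have hcard : (Finset.univ : Finset (Fin r)).card = r := Finset.card_fin _
  have hvol : b.ExteriorAlgebra Finset.univ = ιMulti R r b :=
    (ExteriorAlgebra.basis_apply_ofCard b hcard).trans
      (congrArg (fun g => ιMulti R r (b ∘ g)) (orderEmbOfFin_univ_eq_id hcard))
  exact hvol ▸ b.ExteriorAlgebra.ne_zero Finset.univ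

variable [Fintype κ] [LinearOrder κ]

theorem sum_ιPair_pow_smul (v w : κ → M) {I K : Finset κ} {p q m : ℕ} (hI : I.card = 2 * p)
    (hK : K.card = 2 * q) (h : p + q + m = Fintype.card κ) :
    ((∑ i, ιPair R (v i) (w i)) ^ m) •
        (ιMulti R _ (v ∘ I.orderEmbOfFin hI) * ιMulti R _ (w ∘ K.orderEmbOfFin hK)) =
      if I = K then ((-1) ^ q * m.factorial : R) •
        ((∏ i, ιPair R (v i) (w i) : Subalgebra.center R _) : ExteriorAlgebra R M) else 0 := by
  have hsq (i : κ) := ιPair_mul_self (R := R) (v i) (w i)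
  split_ifs with hIK
  · obtain rfl : p = q := by subst hIK; omega
    subst hIK
    rw [ιMulti_mul_ιMulti_eq_prod_ιPair, neg_one_pow_two_mul_choose_two, smul_comm,
      Subalgebra.smul_def, smul_eq_mul, ← MulMemClass.coe_mul, mul_comm]
    simp only [Function.comp_apply]
    rw [prod_orderEmbOfFin hI fun i => ιPair R (v i) (w i), prod_mul_sum_pow hsq (by omega),
      mul_smul, Nat.cast_smul_eq_nsmul]
    rfl
  · refine sum_pow_smul_eq_zero hsq (card_compl_union_lt hI hK h hIK) fun i hi => ?_
    rcases Finset.mem_union.mp hi with hi | hi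
    · have hv : v i ∈ Set.range (v ∘ I.orderEmbOfFin hI) := by
        rw [Set.range_comp, Finset.range_orderEmbOfFin]
        exact Set.mem_image_of_mem v hi
      rw [← smul_mul_assoc, ιPair_smul_eq_zero_of_left _ (ι_mul_ιMulti_of_mem_range hv), zero_mul]
    · have hw : w i ∈ Set.range (w ∘ K.orderEmbOfFin hK) := by
        rw [Set.range_comp, Finset.range_orderEmbOfFin]
        exact Set.mem_image_of_mem w hi
      rw [← mul_center_smul, ιPair_smul_eq_zero_of_right _ (ι_mul_ιMulti_of_mem_range hw),
        mul_zero]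

end ExteriorAlgebra

section TwoForms

open ExteriorAlgebra (ι ιMulti)

variable {A V κ : Type*} [Ring A] [Algebra ℂ A] [AddCommGroup V] [Module ℂ V] [Fintype κ]

/-- The 2-form `½ ∑ᵢⱼ Bᵢⱼ vᵢ ∧ vⱼ` attached to a matrix `B` over a noncommutative algebra; the
entries of `B` are made to commute with the vectors by tensoring with the exterior algebra. -/
def twoForm (B : Matrix κ κ A) (v : κ → V) : A ⊗[ℂ] ExteriorAlgebra ℂ V :=
  (2 : ℂ)⁻¹ • ∑ i, ∑ j, B i j ⊗ₜ[ℂ] (ι ℂ (v i) * ι ℂ (v j))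

/-- The product of the entries of `B` along a word `f` of even length, as in the summands of a
Pfaffian. -/
def wordProd {A κ : Type*} [Monoid A] (B : Matrix κ κ A) {k : ℕ} (f : Fin (2 * k) → κ) : A :=
  (List.ofFn fun i : Fin k =>
    B (f ⟨2 * (i : ℕ), by have := i.isLt; omega⟩)
      (f ⟨2 * (i : ℕ) + 1, by have := i.isLt; omega⟩)).prod

theorem wordProd_cons_cons {A κ : Type*} [Monoid A] (B : Matrix κ κ A) {k : ℕ} (i j : κ)
    (f : Fin (2 * k) → κ) :
    wordProd B (k := k + 1) (Fin.cons i (Fin.cons j f : Fin (2 * k + 1) → κ)) =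
      B i j * wordProd B f := by
  rw [wordProd, List.ofFn_succ, List.prod_cons]
  rfl

theorem Pf_submatrix_eq_sum_wordProd {κ : Type*} (B : Matrix κ κ A) {k : ℕ}
    (g : Fin (2 * k) → κ) :
    Pf (B.submatrix g g) = ((2 : ℂ) ^ k * k.factorial)⁻¹ • ∑ σ : Equiv.Perm (Fin (2 * k)),
      (Equiv.Perm.sign σ : ℤ) • wordProd B (g ∘ σ) :=
  rfl

theorem twoForm_pow (B : Matrix κ κ A) (v : κ → V) (k : ℕ) :
    twoForm B v ^ k = ((2 : ℂ) ^ k)⁻¹ •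
      ∑ f : Fin (2 * k) → κ, wordProd B f ⊗ₜ[ℂ] ιMulti ℂ (2 * k) (v ∘ f) := by
  rw [twoForm, smul_pow, inv_pow]
  congr 1
  induction k with
  | zero => simp [wordProd, Algebra.TensorProduct.one_def]
  | succ k ih =>
    rw [pow_succ', ih, Finset.sum_mul]
    refine Eq.trans ?_ (sum_fin_succ_fun (m := 2 * k + 1) _).symm
    refine Finset.sum_congr rfl fun i _ => ?_
    rw [sum_fin_succ_fun, Finset.sum_mul]
    refine Finset.sum_congr rfl fun j _ => ?_
    rw [Finset.mul_sum]
    refine Finset.sum_congr rfl fun f _ => ?_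
    rw [Algebra.TensorProduct.tmul_mul_tmul, wordProd_cons_cons, mul_assoc]
    refine congrArg _ (Eq.symm ?_)
    exact (ιMulti_succ_eq_mul_tail (r := 2 * k + 1) _).trans
      (congrArg (ι ℂ (v i) * ·) (ιMulti_succ_eq_mul_tail _))

theorem inv_factorial_smul_twoForm_pow [LinearOrder κ] (B : Matrix κ κ A) (v : κ → V) (k : ℕ) :
    (k.factorial : ℂ)⁻¹ • twoForm B v ^ k =
      ∑ I : {I : Finset κ // I.card = 2 * k},
        Pf (B.submatrix (I.1.orderEmbOfFin I.2) (I.1.orderEmbOfFin I.2)) ⊗ₜ[ℂ]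
          ιMulti ℂ (2 * k) (v ∘ I.1.orderEmbOfFin I.2) := by
  rw [twoForm_pow, smul_smul, ← mul_inv, mul_comm, sum_fun_eq_sum_orderEmbOfFin_comp_perm,
    Finset.smul_sum]
  · refine Finset.sum_congr rfl fun I _ => ?_
    rw [Pf_submatrix_eq_sum_wordProd, ← TensorProduct.smul_tmul', TensorProduct.sum_tmul]
    congr 1
    refine Finset.sum_congr rfl fun σ _ => ?_
    rw [← Function.comp_assoc, AlternatingMap.map_perm, TensorProduct.tmul_smul,
      ← TensorProduct.smul_tmul']
    rfl
  · intro f hf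
    rw [(ιMulti ℂ (2 * k)).map_eq_zero_of_not_injective _ fun h => hf h.of_comp,
      TensorProduct.tmul_zero]

theorem Pf_tmul_ιMulti {m : ℕ} (B : Matrix (Fin (2 * m)) (Fin (2 * m)) A)
    (v : Fin (2 * m) → V) :
    Pf B ⊗ₜ[ℂ] ιMulti ℂ (2 * m) v = (m.factorial : ℂ)⁻¹ • twoForm B v ^ m := by
  have hcard : (Finset.univ : Finset (Fin (2 * m))).card = 2 * m := Finset.card_fin _
  rw [inv_factorial_smul_twoForm_pow, Fintype.sum_eq_single ⟨Finset.univ, hcard⟩,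
    orderEmbOfFin_univ_eq_id hcard, Matrix.submatrix_id_id, Function.comp_id]
  rintro ⟨I, hI⟩ hne
  exact absurd (Subtype.ext (Finset.eq_univ_of_card I (by simpa using hI))) hne

theorem twoForm_neg (B : Matrix κ κ A) (v : κ → V) : twoForm (-B) v = -twoForm B v := by
  simp only [twoForm, Matrix.neg_apply, TensorProduct.neg_tmul, Finset.sum_neg_distrib, smul_neg]

theorem twoForm_submatrix_equiv {κ' : Type*} [Fintype κ'] (B : Matrix κ κ A) (e : κ' ≃ κ)
    (v : κ → V) : twoForm (B.submatrix e e) (v ∘ e) = twoForm B v := by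
  simp only [twoForm, Matrix.submatrix_apply, Function.comp_apply]
  congr 1
  rw [← e.sum_comp]
  exact Finset.sum_congr rfl fun i _ =>
    e.sum_comp fun j => B (e i) j ⊗ₜ[ℂ] (ι ℂ (v (e i)) * ι ℂ (v j))

theorem twoForm_fromBlocks {κ' : Type*} [Fintype κ'] (B : Matrix κ κ A) (C : Matrix κ κ' A)
    (D : Matrix κ' κ' A) (v : κ → V) (w : κ' → V) :
    twoForm (Matrix.fromBlocks B C (-Cᵀ) D) (Sum.elim v w) =
      twoForm B v + twoForm D w + ∑ i, ∑ j, C i j ⊗ₜ[ℂ] (ι ℂ (v i) * ι ℂ (w j)) := by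
  have hswap : ∑ j, ∑ i, (-Cᵀ) j i ⊗ₜ[ℂ] (ι ℂ (w j) * ι ℂ (v i)) =
      ∑ i, ∑ j, C i j ⊗ₜ[ℂ] (ι ℂ (v i) * ι ℂ (w j)) := by
    rw [Finset.sum_comm]
    refine Finset.sum_congr rfl fun i _ => Finset.sum_congr rfl fun j _ => ?_
    rw [ι_mul_ι_eq_neg (w j), Matrix.neg_apply, Matrix.transpose_apply, TensorProduct.neg_tmul,
      TensorProduct.tmul_neg, neg_neg]
  simp only [twoForm, Fintype.sum_sum_type, Matrix.fromBlocks_apply₁₁, Matrix.fromBlocks_apply₁₂,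
    Matrix.fromBlocks_apply₂₁, Matrix.fromBlocks_apply₂₂, Sum.elim_inl, Sum.elim_inr,
    Finset.sum_add_distrib, hswap]
  module

theorem tmul_right_injective {K A V : Type*} [Field K] [AddCommGroup A] [Module K A]
    [AddCommGroup V] [Module K V] {v : V} (hv : v ≠ 0) :
    Function.Injective fun a : A => a ⊗ₜ[K] v := by
  obtain ⟨φ, hφ⟩ := Module.Projective.exists_dual_eq_one K hv
  intro a b hab
  simpa [hφ] using congrArg (TensorProduct.rid K A ∘ LinearMap.lTensor A φ) hab

/-- The 2-form `∑ᵢ vᵢ ∧ wᵢ` with scalar coefficients, as an element of `A ⊗ ⋀ V`; it is central. -/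
def pairForm (A : Type*) {V κ : Type*} [Ring A] [Algebra ℂ A] [AddCommGroup V] [Module ℂ V]
    [Fintype κ] (v w : κ → V) : A ⊗[ℂ] ExteriorAlgebra ℂ V :=
  1 ⊗ₜ ((∑ i, ιPair ℂ (v i) (w i) : Subalgebra.center ℂ _) : ExteriorAlgebra ℂ V)

theorem pairForm_eq_sum (v w : κ → V) :
    pairForm A v w = ∑ i, 1 ⊗ₜ[ℂ] (ι ℂ (v i) * ι ℂ (w i)) := by
  rw [pairForm, AddSubmonoidClass.coe_finsetSum, TensorProduct.tmul_sum]
  rfl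

theorem pairForm_sq (v w : κ → V) :
    pairForm A v w ^ 2 = ∑ x : κ × κ, 1 ⊗ₜ[ℂ]
      ((ιPair ℂ (v x.1) (w x.1) * ιPair ℂ (v x.2) (w x.2) : Subalgebra.center ℂ _) :
        ExteriorAlgebra ℂ V) := by
  rw [pairForm_eq_sum, sq, Finset.sum_mul_sum, ← Fintype.sum_prod_type']
  simp only [Algebra.TensorProduct.tmul_mul_tmul, mul_one]
  rfl

theorem pairForm_commute (v w : κ → V) (x : A ⊗[ℂ] ExteriorAlgebra ℂ V) :
    Commute (pairForm A v w) x := by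
  induction x using TensorProduct.induction_on with
  | zero => exact Commute.zero_right _
  | tmul a y =>
    rw [commute_iff_eq, pairForm, Algebra.TensorProduct.tmul_mul_tmul,
      Algebra.TensorProduct.tmul_mul_tmul, one_mul, mul_one,
      Subalgebra.mem_center_iff.mp (SetLike.coe_mem _)]
  | add x y hx hy => exact hx.add_right hy

theorem pairForm_pow_mul_tmul (v w : κ → V) (m : ℕ) (a : A) (y : ExteriorAlgebra ℂ V) :
    pairForm A v w ^ m * a ⊗ₜ[ℂ] y = a ⊗ₜ[ℂ] ((∑ i, ιPair ℂ (v i) (w i)) ^ m • y) := by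
  rw [pairForm, Algebra.TensorProduct.tmul_pow, one_pow, Algebra.TensorProduct.tmul_mul_tmul,
    one_mul]
  rfl

theorem twoForm_eq_sum_prod (B : Matrix κ κ A) (v : κ → V) :
    twoForm B v =
      (2 : ℂ)⁻¹ • ∑ x : κ × κ, B x.1 x.2 ⊗ₜ[ℂ] (ι ℂ (v x.1) * ι ℂ (v x.2)) := by
  rw [twoForm, Fintype.sum_prod_type]

theorem twoForm_mul_twoForm_of_weyl [DecidableEq κ] {X D : Matrix κ κ A}
    (h : ∀ x y : κ × κ, D x.1 x.2 * X y.1 y.2 =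
      X y.1 y.2 * D x.1 x.2 + (if x = y then 1 else 0) - if x.swap = y then 1 else 0)
    (v w : κ → V) :
    twoForm D w * twoForm X v =
      twoForm X v * twoForm D w - (2 : ℂ)⁻¹ • pairForm A v w ^ 2 := by
  have hdiag (x : κ × κ) := ι_mul_ι_mul_eq_neg_ιPair_mul (R := ℂ) (w x.1) (w x.2) (v x.1) (v x.2)
  have hswap (x : κ × κ) : ι ℂ (w x.1) * ι ℂ (w x.2) * (ι ℂ (v x.2) * ι ℂ (v x.1)) =
      ((ιPair ℂ (v x.1) (w x.1) * ιPair ℂ (v x.2) (w x.2) : Subalgebra.center ℂ _) :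
        ExteriorAlgebra ℂ V) := by
    rw [ι_mul_ι_eq_neg (v x.2), mul_neg, hdiag, neg_neg]
  have hcenter (x y : κ × κ) : X y.1 y.2 ⊗ₜ[ℂ] (ι ℂ (v y.1) * ι ℂ (v y.2)) *
      D x.1 x.2 ⊗ₜ[ℂ] (ι ℂ (w x.1) * ι ℂ (w x.2)) = (X y.1 y.2 * D x.1 x.2) ⊗ₜ[ℂ]
        (ι ℂ (w x.1) * ι ℂ (w x.2) * (ι ℂ (v y.1) * ι ℂ (v y.2))) := by
    rw [Algebra.TensorProduct.tmul_mul_tmul,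
      Subalgebra.mem_center_iff.mp (ι_mul_ι_mem_center (v y.1) (v y.2))]
  rw [twoForm_eq_sum_prod, twoForm_eq_sum_prod, pairForm_sq, smul_mul_smul_comm,
    smul_mul_smul_comm, Finset.sum_mul_sum, Finset.sum_mul_sum]
  conv_rhs => rw [Finset.sum_comm]
  simp only [Algebra.TensorProduct.tmul_mul_tmul (a₁ := D _ _), hcenter, h, TensorProduct.add_tmul,
    TensorProduct.sub_tmul, TensorProduct.ite_tmul, Finset.sum_add_distrib,
    Finset.sum_sub_distrib, Finset.sum_ite_eq, Finset.mem_univ, if_true, Prod.fst_swap,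
    Prod.snd_swap, hswap, hdiag, TensorProduct.tmul_neg, Finset.sum_neg_distrib]
  module

/-- The sum `∑ Pf(B_I) Pf(C_I)` over the index sets `I` of cardinality `2k`. -/
def pfaffianPairing {κ : Type*} [Fintype κ] [LinearOrder κ] (B C : Matrix κ κ A) (k : ℕ) : A :=
  ∑ I : {I : Finset κ // I.card = 2 * k},
    Pf (B.submatrix (I.1.orderEmbOfFin I.2) (I.1.orderEmbOfFin I.2)) *
      Pf (C.submatrix (I.1.orderEmbOfFin I.2) (I.1.orderEmbOfFin I.2))

theorem pairForm_pow_mul_twoForm_pow_mul_twoForm_pow [LinearOrder κ] (B C : Matrix κ κ A)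
    (v w : κ → V) {p q m : ℕ} (h : p + q + m = Fintype.card κ) :
    pairForm A v w ^ m * (((p.factorial : ℂ)⁻¹ • twoForm B v ^ p) *
        ((q.factorial : ℂ)⁻¹ • (-twoForm C w) ^ q)) =
      if p = q then ((m.factorial : ℂ) • pfaffianPairing B C p) ⊗ₜ[ℂ]
        ((∏ i, ιPair ℂ (v i) (w i) : Subalgebra.center ℂ _) : ExteriorAlgebra ℂ V) else 0 := by
  have hterm (I : {I : Finset κ // I.card = 2 * p}) (K : {K : Finset κ // K.card = 2 * q})
      (a : A) : (-1 : ℂ) ^ q • a ⊗ₜ[ℂ] ((∑ i, ιPair ℂ (v i) (w i)) ^ m •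
        (ιMulti ℂ (2 * p) (v ∘ I.1.orderEmbOfFin I.2) *
          ιMulti ℂ (2 * q) (w ∘ K.1.orderEmbOfFin K.2))) =
      if I.1 = K.1 then ((m.factorial : ℂ) • a) ⊗ₜ[ℂ]
        ((∏ i, ιPair ℂ (v i) (w i) : Subalgebra.center ℂ _) : ExteriorAlgebra ℂ V) else 0 := by
    rw [sum_ιPair_pow_smul v w I.2 K.2 h]
    split_ifs
    · rw [TensorProduct.tmul_smul, smul_smul, ← mul_assoc, ← mul_pow, neg_one_mul, neg_neg,
        one_pow, one_mul, TensorProduct.smul_tmul']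
    · rw [TensorProduct.tmul_zero, smul_zero]
  rw [← neg_one_smul ℂ (twoForm C w), smul_pow, smul_comm, mul_smul_comm, mul_smul_comm,
    inv_factorial_smul_twoForm_pow, inv_factorial_smul_twoForm_pow, Finset.sum_mul_sum]
  simp only [Finset.mul_sum, Finset.smul_sum, Algebra.TensorProduct.tmul_mul_tmul,
    pairForm_pow_mul_tmul, hterm]
  split_ifs with hpq
  · subst hpq
    simp only [← Subtype.ext_iff, Finset.sum_ite_eq, Finset.mem_univ, if_true, pfaffianPairing,
      Finset.smul_sum, TensorProduct.sum_tmul]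
  · refine Finset.sum_eq_zero fun I _ => Finset.sum_eq_zero fun K _ => if_neg fun hIK => hpq ?_
    have hcard := I.2
    rw [hIK, K.2] at hcard
    omega

theorem pairForm_pow_mul_sum_antidiagonal [LinearOrder κ] (B C : Matrix κ κ A)
    (v w : κ → V) {k m : ℕ} (h : m + k = Fintype.card κ) :
    pairForm A v w ^ m * ∑ q ∈ antidiagonal k, ((q.1.factorial : ℂ)⁻¹ • twoForm B v ^ q.1) *
        ((q.2.factorial : ℂ)⁻¹ • (-twoForm C w) ^ q.2) =
      if 2 ∣ k then ((m.factorial : ℂ) • pfaffianPairing B C (k / 2)) ⊗ₜ[ℂ]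
        ((∏ i, ιPair ℂ (v i) (w i) : Subalgebra.center ℂ _) : ExteriorAlgebra ℂ V) else 0 := by
  rw [← sum_antidiagonal_ite_eq (fun p => ((m.factorial : ℂ) • pfaffianPairing B C p) ⊗ₜ[ℂ] _),
    Finset.mul_sum]
  refine Finset.sum_congr rfl fun q hq => pairForm_pow_mul_twoForm_pow_mul_twoForm_pow B C v w ?_
  rw [mem_antidiagonal.mp hq, add_comm, h]

theorem inv_factorial_smul_pow_card_of_weyl [LinearOrder κ] {X D : Matrix κ κ A}
    (h : ∀ x y : κ × κ, D x.1 x.2 * X y.1 y.2 =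
      X y.1 y.2 * D x.1 x.2 + (if x = y then 1 else 0) - if x.swap = y then 1 else 0)
    (v w : κ → V) (u : ℂ) {n : ℕ} (hn : Fintype.card κ = n) :
    (n.factorial : ℂ)⁻¹ • (twoForm X v + -twoForm D w + u • pairForm A v w) ^ n =
      (∑ k ∈ Finset.range (n / 2 + 1), aPoly (n - 2 * k) u • pfaffianPairing X D k) ⊗ₜ[ℂ]
        ((∏ i, ιPair ℂ (v i) (w i) : Subalgebra.center ℂ _) : ExteriorAlgebra ℂ V) := by
  have hcomm : -twoForm D w * twoForm X v =
      twoForm X v * -twoForm D w + (2 : ℂ)⁻¹ • pairForm A v w ^ 2 := by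
    rw [neg_mul, twoForm_mul_twoForm_of_weyl h, mul_neg, neg_sub', sub_neg_eq_add]
  rw [inv_factorial_smul_add_add_smul_pow u n (pairForm_commute v w _) (pairForm_commute v w _)
    hcomm, TensorProduct.sum_tmul, ← sum_antidiagonal_even_snd (fun m k =>
      (aPoly m u • pfaffianPairing X D k) ⊗ₜ[ℂ] _)]
  refine Finset.sum_congr rfl fun p hp => ?_
  have hfact : (p.1.factorial : ℂ) ≠ 0 := Nat.cast_ne_zero.mpr p.1.factorial_ne_zero
  rw [smul_mul_assoc, pairForm_pow_mul_sum_antidiagonal X D v w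
    ((mem_antidiagonal.mp hp).trans hn.symm), smul_ite, smul_zero, TensorProduct.smul_tmul',
    smul_smul, div_mul_cancel₀ _ hfact]

end TwoForms

section WeylAlgebra

variable {n : ℕ}

theorem Mop_eq_mulLeft (i j : Fin n) : Mop n i j = LinearMap.mulLeft ℂ (genMat n i j) := by
  simp only [Mop, genMat, Matrix.of_apply]
  split_ifs <;> ext <;> simp

theorem Dop_mul (k l : Fin n) (p q : P n) :
    Dop n k l (p * q) = Dop n k l p * q + p * Dop n k l q := by
  simp only [Dop]
  split_ifs <;> simp <;> ring

theorem Dop_genMat (x y : Fin n × Fin n) :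
    Dop n x.1 x.2 (genMat n y.1 y.2) =
      (if x = y then 1 else 0) - if x.swap = y then 1 else 0 := by
  simp only [Dop, genMat, Matrix.of_apply, Prod.ext_iff, Prod.fst_swap, Prod.snd_swap]
  split_ifs <;> simp [pderiv_X, Pi.single_apply] <;> grind

theorem Dop_mul_Mop (x y : Fin n × Fin n) :
    Dop n x.1 x.2 * Mop n y.1 y.2 = Mop n y.1 y.2 * Dop n x.1 x.2 +
      (if x = y then 1 else 0) - if x.swap = y then 1 else 0 := by
  refine LinearMap.ext fun p => ?_
  rw [Mop_eq_mulLeft, Module.End.mul_apply, LinearMap.mulLeft_apply, Dop_mul, Dop_genMat]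
  split_ifs <;> simp [add_comm, sub_eq_add_neg]

end WeylAlgebra

section PhiTilde

variable {n : ℕ}

/-- The first half of a family of `2n` vectors. -/
def firstHalf {V : Type*} (v : Fin (2 * n) → V) : Fin n → V :=
  v ∘ sumEquiv n ∘ Sum.inl

/-- The second half of a family of `2n` vectors, in reverse order, to absorb the matrices `J_n`. -/
def secondHalfRev {V : Type*} (v : Fin (2 * n) → V) : Fin n → V :=
  v ∘ sumEquiv n ∘ Sum.inr ∘ Fin.rev

theorem comp_sumEquiv {V : Type*} (v : Fin (2 * n) → V) :
    v ∘ sumEquiv n = Sum.elim (firstHalf v) (secondHalfRev v ∘ Fin.revPerm) := by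
  ext (i | i) <;> simp [firstHalf, secondHalfRev]

theorem Jmat_apply {A : Type*} [Zero A] [One A] (a b : Fin n) :
    Jmat A n a b = if Fin.rev a = b then 1 else 0 := by
  simp only [Jmat, Matrix.of_apply, Fin.ext_iff, Fin.val_rev]
  congr 1
  apply propext
  omega

theorem Jmat_transpose {A : Type*} [Zero A] [One A] : (Jmat A n)ᵀ = Jmat A n := by
  ext a b
  simp only [Jmat, Matrix.transpose_apply, Matrix.of_apply, add_comm]

theorem Jmat_mul_mul_Jmat {A : Type*} [Ring A] (B : Matrix (Fin n) (Fin n) A) :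
    Jmat A n * B * Jmat A n = B.submatrix Fin.revPerm Fin.revPerm := by
  ext a b
  have h (i : Fin n) : Fin.rev i = b ↔ i = Fin.rev b := Fin.rev_eq_iff
  simp [Matrix.mul_apply, Jmat_apply, h]

theorem sum_Jmat_tmul {A V : Type*} [Ring A] [Algebra ℂ A] [AddCommGroup V] [Module ℂ V] (u : ℂ)
    (v w : Fin n → V) :
    ∑ i, ∑ j, (u • Jmat A n) i j ⊗ₜ[ℂ] (ExteriorAlgebra.ι ℂ (v i) *
      ExteriorAlgebra.ι ℂ ((w ∘ Fin.revPerm) j)) = u • pairForm A v w := by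
  simp [Jmat_apply, pairForm_eq_sum, TensorProduct.ite_tmul, TensorProduct.smul_tmul',
    Finset.smul_sum]

theorem twoForm_PhiTilde {V : Type*} [AddCommGroup V] [Module ℂ V] (u : ℂ)
    (v : Fin (2 * n) → V) :
    twoForm (PhiTilde n u) v =
      twoForm (Matrix.of (Mop n)) (firstHalf v) +
        -twoForm (Matrix.of (Dop n)) (secondHalfRev v) +
        u • pairForm _ (firstHalf v) (secondHalfRev v) := by
  have hJ : u • Jmat (Module.End ℂ (P n)) n = (u • Jmat (Module.End ℂ (P n)) n)ᵀ := by
    rw [Matrix.transpose_smul, Jmat_transpose]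
  rw [← twoForm_submatrix_equiv _ (sumEquiv n), comp_sumEquiv, ← sum_Jmat_tmul, ← twoForm_neg,
    ← twoForm_submatrix_equiv (-Matrix.of (Dop n)) Fin.revPerm, ← twoForm_fromBlocks, ← hJ,
    PhiTilde, Jmat_mul_mul_Jmat, Matrix.reindex_apply, Matrix.submatrix_submatrix,
    Equiv.symm_comp_self, Matrix.submatrix_id_id]
  rfl

theorem ιMulti_eq_prod_ιPair_halves {R M : Type*} [CommRing R] [AddCommGroup M] [Module R M]
    (v : Fin (2 * n) → M) :
    ExteriorAlgebra.ιMulti R (2 * n) v =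
      ((∏ i, ιPair R (firstHalf v i) (secondHalfRev v i) : Subalgebra.center R _) :
        ExteriorAlgebra R M) := by
  rw [← ιMulti_mul_ιMulti_rev]
  simp only [ExteriorAlgebra.ιMulti_apply]
  rw [List.ofFn_congr (two_mul n), List.ofFn_add, List.prod_append]
  congr 3
  ext i
  simp [secondHalfRev, sumEquiv]

theorem pfaffianPairing_Mop_Dop (k : ℕ) :
    pfaffianPairing (Matrix.of (Mop n)) (Matrix.of (Dop n)) k = Gamma n k :=
  rfl

end PhiTilde

/-- `Pf(Φ̃(u)) = Σ_{k=0}^{⌊n/2⌋} a_{n−2k}(u) Γ_k`. -/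
theorem Pf_PhiTilde_generating (n : ℕ) (hn : 1 ≤ n) (u : ℂ) :
    Pf (PhiTilde n u) =
      ∑ k ∈ Finset.range (n / 2 + 1), aPoly (n - 2 * k) u • Gamma n k := by
  let b := Pi.basisFun ℂ (Fin (2 * n))
  refine tmul_right_injective (K := ℂ) (ιMulti_basis_ne_zero b) ?_
  calc Pf (PhiTilde n u) ⊗ₜ[ℂ] ExteriorAlgebra.ιMulti ℂ (2 * n) b
      = (n.factorial : ℂ)⁻¹ • twoForm (PhiTilde n u) b ^ n := Pf_tmul_ιMulti _ _
    _ = (n.factorial : ℂ)⁻¹ • (twoForm (Matrix.of (Mop n)) (firstHalf b) +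
          -twoForm (Matrix.of (Dop n)) (secondHalfRev b) +
          u • pairForm _ (firstHalf b) (secondHalfRev b)) ^ n := by rw [twoForm_PhiTilde]
    _ = (∑ k ∈ Finset.range (n / 2 + 1), aPoly (n - 2 * k) u • Gamma n k) ⊗ₜ[ℂ]
          ExteriorAlgebra.ιMulti ℂ (2 * n) b := by
      simp only [ιMulti_eq_prod_ιPair_halves, ← pfaffianPairing_Mop_Dop]
      exact inv_factorial_smul_pow_card_of_weyl Dop_mul_Mop _ _ u (Fintype.card_fin n)

end
end
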